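/- Appendix Lemma (coercivity of the relative entropy): Assume ψ̂ ∈ C³(ℝ^{19} × (0,∞)) satisfies the growth conditions, that ∇²_ξ ψ̂(ξ,θ) is positive definite and ∂_θ η̂(ξ,θ) > 0 for all (ξ,θ), and let M, δ > 0. Then there exist R = R(M,δ) and constants K₁ = K₁(M,δ,c) > 0, K₂ = K₂(M,δ,c) > 0 such that for every (ξ,v,θ) ∈ ℝ^{19} × ℝ³ × (0,∞) with ξ = (F,ζ,w) and every (ξ̄,v̄,θ̄) ∈ Γ_{M,δ}: I(ξ,v,θ|ξ̄,v̄,θ̄) ≥ (K₁/2)(|ξ|_{p,q,r} + θ^ℓ + |v|²) whenever |ξ|_{p,q,r} + θ^ℓ + |v|² > R, and I(ξ,v,θ|ξ̄,v̄,θ̄) ≥ K₂(|F − F̄|² + |ζ − ζ̄|² + |w − w̄|² + |θ − θ̄|² + |v − v̄|²) whenever |ξ|_{p,q,r} + θ^ℓ + |v|² ≤ R. -/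

import Mathlib

open Real MeasureTheory Filter Set Topology ENNReal NNReal

noncomputable section

abbrev Vec3 := Fin 3 → ℝ
abbrev Mat3 := Fin 3 → Fin 3 → ℝ
abbrev Xi := Mat3 × Mat3 × ℝ
abbrev Idx := (Fin 3 × Fin 3) ⊕ ((Fin 3 × Fin 3) ⊕ Unit)
abbrev FullState := Xi × Vec3 × ℝ

/-- Levi-Civita symbol on three indices. -/
def eps3 (i j k : Fin 3) : ℝ :=
  if (i, j, k) = (0, 1, 2) ∨ (i, j, k) = (1, 2, 0) ∨ (i, j, k) = (2, 0, 1) then 1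
  else if (i, j, k) = (2, 1, 0) ∨ (i, j, k) = (1, 0, 2) ∨ (i, j, k) = (0, 2, 1) then -1
  else 0

/-- Cofactor matrix (cof F)_{iα} = (1/2) ε_{ijk} ε_{αβγ} F_{jβ} F_{kγ}. -/
def cof3 (F : Mat3) : Mat3 := fun i α =>
  (1/2) * ∑ j, ∑ k, ∑ β, ∑ γ, eps3 i j k * eps3 α β γ * F j β * F k γ

/-- det F = (1/6) ε_{ijk} ε_{αβγ} F_{iα} F_{jβ} F_{kγ}. -/
def det3 (F : Mat3) : ℝ :=
  (1/6) * ∑ i, ∑ j, ∑ k, ∑ α, ∑ β, ∑ γ,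
    eps3 i j k * eps3 α β γ * F i α * F j β * F k γ

/-- The vector of null Lagrangians Φ(F) = (F, cof F, det F). -/
def Phi3 (F : Mat3) : Xi := (F, cof3 F, det3 F)

/-- Component ξ^B of ξ ∈ ℝ^19. -/
def xiComp (ξ : Xi) : Idx → ℝ
  | .inl (i, α) => ξ.1 i α
  | .inr (.inl (i, α)) => ξ.2.1 i α
  | .inr (.inr _) => ξ.2.2

def updMat (F : Mat3) (i α : Fin 3) (s : ℝ) : Mat3 :=
  Function.update F i (Function.update (F i) α s)

/-- Update component B of ξ to value s. -/
def xiUpd (ξ : Xi) : Idx → ℝ → Xi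
  | .inl (i, α), s => (updMat ξ.1 i α s, ξ.2)
  | .inr (.inl (i, α)), s => (ξ.1, updMat ξ.2.1 i α s, ξ.2.2)
  | .inr (.inr _), s => (ξ.1, ξ.2.1, s)

/-- ∂Φ^B/∂F_{iα}(F). -/
def dPhi (B : Idx) (i α : Fin 3) (F : Mat3) : ℝ :=
  deriv (fun s => xiComp (Phi3 (updMat F i α s)) B) (F i α)

/-- Partial derivative ∂ψ̂/∂ξ^B of a function ψ̂(ξ, θ). -/
def dXi (B : Idx) (ψ : Xi → ℝ → ℝ) (ξ : Xi) (θ : ℝ) : ℝ :=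
  deriv (fun s => ψ (xiUpd ξ B s) θ) (xiComp ξ B)

/-- Partial derivative ∂ψ̂/∂θ. -/
def dTh (ψ : Xi → ℝ → ℝ) (ξ : Xi) (θ : ℝ) : ℝ :=
  deriv (fun s => ψ ξ s) θ

/-- η̂(ξ,θ) = −∂_θ ψ̂(ξ,θ). -/
def etaHat (ψ : Xi → ℝ → ℝ) (ξ : Xi) (θ : ℝ) : ℝ := -(dTh ψ ξ θ)

/-- ê(ξ,θ) = ψ̂(ξ,θ) − θ ∂_θ ψ̂(ξ,θ). -/
def eHat (ψ : Xi → ℝ → ℝ) (ξ : Xi) (θ : ℝ) : ℝ := ψ ξ θ - θ * dTh ψ ξ θ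

/-- Spatial partial derivative ∂_α of a space-time field. -/
def pdx (α : Fin 3) (f : Vec3 → ℝ → ℝ) (x : Vec3) (t : ℝ) : ℝ :=
  deriv (fun s => f (Function.update x α s) t) (x α)

/-- Time derivative ∂_t of a space-time field. -/
def pdt (f : Vec3 → ℝ → ℝ) (x : Vec3) (t : ℝ) : ℝ :=
  deriv (fun s => f x s) t

def mnorm (F : Mat3) : ℝ := Real.sqrt (∑ i, ∑ j, (F i j)^2)
def vnorm (v : Vec3) : ℝ := Real.sqrt (∑ i, (v i)^2)

/-- |ξ|_{p,q,r} = |F|^p + |ζ|^q + |w|^r. -/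
def xiNorm (p q r : ℝ) (ξ : Xi) : ℝ :=
  mnorm ξ.1 ^ p + mnorm ξ.2.1 ^ q + |ξ.2.2| ^ r

/-- The compact set Γ_{M,δ}. -/
def Gamma (M δ : ℝ) : Set FullState :=
  {U | mnorm U.1.1 ≤ M ∧ mnorm U.1.2.1 ≤ M ∧ |U.1.2.2| ≤ M ∧
       vnorm U.2.1 ≤ M ∧ δ ≤ U.2.2 ∧ U.2.2 ≤ M}

/-- Relative free energy ψ̂(ξ,θ|ξ̄,θ̄). -/
def psiRel (ψ : Xi → ℝ → ℝ) (ξ : Xi) (θ : ℝ) (ξ' : Xi) (θ' : ℝ) : ℝ :=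
  ψ ξ θ - ψ ξ' θ' - (∑ B : Idx, dXi B ψ ξ' θ' * (xiComp ξ B - xiComp ξ' B))
    + etaHat ψ ξ' θ' * (θ - θ')

/-- Relative entropy function η̂(ξ,θ|ξ̄,θ̄). -/
def etaRel (ψ : Xi → ℝ → ℝ) (ξ : Xi) (θ : ℝ) (ξ' : Xi) (θ' : ℝ) : ℝ :=
  etaHat ψ ξ θ - etaHat ψ ξ' θ'
    - (∑ B : Idx, dXi B (etaHat ψ) ξ' θ' * (xiComp ξ B - xiComp ξ' B))
    - dTh (etaHat ψ) ξ' θ' * (θ - θ')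

/-- Relative stress (∂ψ̂/∂ξ^B)(ξ,θ|ξ̄,θ̄). -/
def dXiRel (B : Idx) (ψ : Xi → ℝ → ℝ) (ξ : Xi) (θ : ℝ) (ξ' : Xi) (θ' : ℝ) : ℝ :=
  dXi B ψ ξ θ - dXi B ψ ξ' θ'
    - (∑ A : Idx, dXi A (dXi B ψ) ξ' θ' * (xiComp ξ A - xiComp ξ' A))
    - dTh (dXi B ψ) ξ' θ' * (θ - θ')

/-- Relative entropy I(ξ,v,θ|ξ̄,v̄,θ̄). -/
def relEnt (ψ : Xi → ℝ → ℝ) (ξ : Xi) (v : Vec3) (θ : ℝ)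
    (ξ' : Xi) (v' : Vec3) (θ' : ℝ) : ℝ :=
  psiRel ψ ξ θ ξ' θ' + (1/2) * (∑ i, (v i - v' i)^2)
    + (etaHat ψ ξ θ - etaHat ψ ξ' θ') * (θ - θ')

/-- ψ̂ is C³ on ℝ^19 × (0,∞). -/
def PsiC3 (ψ : Xi → ℝ → ℝ) : Prop :=
  ContDiffOn ℝ 3 (fun p : Xi × ℝ => ψ p.1 p.2) (Set.univ ×ˢ Set.Ioi (0:ℝ))

/-- ∇²_ξ ψ̂ > 0 and ∂_θ η̂ > 0. -/
def PsiConvex (ψ : Xi → ℝ → ℝ) : Prop :=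
  ∀ ξ : Xi, ∀ θ : ℝ, 0 < θ →
    (∀ u : Idx → ℝ, u ≠ 0 →
      0 < ∑ A : Idx, ∑ B : Idx, dXi A (dXi B ψ) ξ θ * u A * u B) ∧
    0 < dTh (etaHat ψ) ξ θ

def gradFnorm (ψ : Xi → ℝ → ℝ) (ξ : Xi) (θ : ℝ) : ℝ :=
  Real.sqrt (∑ i, ∑ α, (dXi (.inl (i, α)) ψ ξ θ)^2)
def gradZnorm (ψ : Xi → ℝ → ℝ) (ξ : Xi) (θ : ℝ) : ℝ :=
  Real.sqrt (∑ i, ∑ α, (dXi (.inr (.inl (i, α))) ψ ξ θ)^2)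
def gradWnorm (ψ : Xi → ℝ → ℝ) (ξ : Xi) (θ : ℝ) : ℝ :=
  |dXi (.inr (.inr ())) ψ ξ θ|

/-- The growth conditions (gr.con.1)-(gr.con.3). -/
def GrowthCond (ψ : Xi → ℝ → ℝ) (c p q r ℓ : ℝ) : Prop :=
  0 < c ∧
  (∀ ξ : Xi, ∀ θ : ℝ, 0 < θ →
    c * (xiNorm p q r ξ + θ ^ ℓ) - c ≤ eHat ψ ξ θ ∧
    eHat ψ ξ θ ≤ c * (xiNorm p q r ξ + θ ^ ℓ) + c) ∧
  (∀ ε : ℝ, 0 < ε → ∃ R : ℝ, ∀ ξ : Xi, ∀ θ : ℝ, 0 < θ →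
    R < xiNorm p q r ξ + θ ^ ℓ →
    gradFnorm ψ ξ θ + gradZnorm ψ ξ θ ^ (p/(p-1)) + gradWnorm ψ ξ θ ^ (p/(p-2))
      ≤ ε * (xiNorm p q r ξ + θ ^ ℓ)) ∧
  (∀ ε : ℝ, 0 < ε → ∃ R : ℝ, ∀ ξ : Xi, ∀ θ : ℝ, 0 < θ →
    R < xiNorm p q r ξ + θ ^ ℓ →
    |dTh ψ ξ θ| ≤ ε * (xiNorm p q r ξ + θ ^ ℓ))

/-- The augmented thermoviscoelasticity system with fields (Z, Q, r), at a point (x,t). -/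
def AugSys (ψ : Xi → ℝ → ℝ) (ξf : Vec3 → ℝ → Xi) (vf : Vec3 → ℝ → Vec3)
    (θf : Vec3 → ℝ → ℝ) (Z : Vec3 → ℝ → Mat3) (Q : Vec3 → ℝ → Vec3)
    (r : Vec3 → ℝ → ℝ) (x : Vec3) (t : ℝ) : Prop :=
  (∀ B : Idx, pdt (fun y s => xiComp (ξf y s) B) x t
      = ∑ α, pdx α (fun y s => ∑ i, dPhi B i α (ξf y s).1 * vf y s i) x t) ∧
  (∀ i, pdt (fun y s => vf y s i) x t
      = ∑ α, pdx α (fun y s =>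
          ∑ B : Idx, dXi B ψ (ξf y s) (θf y s) * dPhi B i α (ξf y s).1) x t
        + ∑ α, pdx α (fun y s => Z y s i α) x t) ∧
  (pdt (fun y s => (1/2) * (∑ i, (vf y s i)^2) + eHat ψ (ξf y s) (θf y s)) x t
      = ∑ α, pdx α (fun y s => ∑ i,
          (∑ B : Idx, dXi B ψ (ξf y s) (θf y s) * dPhi B i α (ξf y s).1) * vf y s i) x t
        + ∑ α, pdx α (fun y s => ∑ i, Z y s i α * vf y s i) x t
        + ∑ α, pdx α (fun y s => Q y s α) x t + r x t) ∧
  (∀ i α β, pdx α (fun y s => (ξf y s).1 i β) x t = pdx β (fun y s => (ξf y s).1 i α) x t)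

/-- The entropy production identity for the augmented system. -/
def EntropyIdent (ψ : Xi → ℝ → ℝ) (ξf : Vec3 → ℝ → Xi) (vf : Vec3 → ℝ → Vec3)
    (θf : Vec3 → ℝ → ℝ) (Z : Vec3 → ℝ → Mat3) (Q : Vec3 → ℝ → Vec3)
    (r : Vec3 → ℝ → ℝ) (x : Vec3) (t : ℝ) : Prop :=
  pdt (fun y s => etaHat ψ (ξf y s) (θf y s)) x t
    - ∑ α, pdx α (fun y s => Q y s α / θf y s) x t
  = (∑ α, pdx α θf x t * Q x t α) / (θf x t)^2
    + (∑ α, ∑ i, pdx α (fun y s => vf y s i) x t * Z x t i α) / θf x t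
    + r x t / θf x t

/-- Newtonian viscous stress Z = μ ∇v. -/
def newtonianZ (μ : Mat3 → ℝ → ℝ) (ξf : Vec3 → ℝ → Xi) (vf : Vec3 → ℝ → Vec3)
    (θf : Vec3 → ℝ → ℝ) : Vec3 → ℝ → Mat3 :=
  fun x t i α => μ (ξf x t).1 (θf x t) * pdx α (fun y s => vf y s i) x t

/-- Fourier heat flux Q = k ∇θ. -/
def fourierQ (k : Mat3 → ℝ → ℝ) (ξf : Vec3 → ℝ → Xi)
    (θf : Vec3 → ℝ → ℝ) : Vec3 → ℝ → Vec3 :=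
  fun x t α => k (ξf x t).1 (θf x t) * pdx α θf x t

/-- The entropy identity for Newtonian viscosity and Fourier heat conduction (zero supply). -/
def EntropyIdentNF (ψ : Xi → ℝ → ℝ) (μ k : Mat3 → ℝ → ℝ) (ξf : Vec3 → ℝ → Xi)
    (vf : Vec3 → ℝ → Vec3) (θf : Vec3 → ℝ → ℝ) (x : Vec3) (t : ℝ) : Prop :=
  pdt (fun y s => etaHat ψ (ξf y s) (θf y s)) x t
    - ∑ α, pdx α (fun y s =>
        k (ξf y s).1 (θf y s) * pdx α θf y s / θf y s) x t
  = k (ξf x t).1 (θf x t) * (∑ α, (pdx α θf x t)^2) / (θf x t)^2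
    + μ (ξf x t).1 (θf x t) *
        (∑ α, ∑ i, (pdx α (fun y s => vf y s i) x t)^2) / θf x t

/-- Fundamental domain of the 3-torus. -/
def Box : Set Vec3 := Set.Icc 0 1

/-- Periodicity in the space variables with period 1. -/
def PeriodicX {E : Type*} (f : Vec3 → ℝ → E) : Prop :=
  ∀ (x : Vec3) (t : ℝ) (α : Fin 3), f (x + Pi.single α 1) t = f x t

/-- C^n regularity of a space-time field. -/
def FieldC {E : Type*} [NormedAddCommGroup E] [NormedSpace ℝ E]
    (n : ℕ) (f : Vec3 → ℝ → E) : Prop :=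
  ContDiff ℝ n (fun p : Vec3 × ℝ => f p.1 p.2)

/-- Spatial integral of the relative entropy at time t. -/
def relEntInt (ψ : Xi → ℝ → ℝ) (ξf : Vec3 → ℝ → Xi) (vf : Vec3 → ℝ → Vec3)
    (θf : Vec3 → ℝ → ℝ) (ξf' : Vec3 → ℝ → Xi) (vf' : Vec3 → ℝ → Vec3)
    (θf' : Vec3 → ℝ → ℝ) (t : ℝ) : ℝ :=
  ∫ x in Box, relEnt ψ (ξf x t) (vf x t) (θf x t) (ξf' x t) (vf' x t) (θf' x t)


/-- Spatial partial derivative of a static field. -/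
def pds (α : Fin 3) (f : Vec3 → ℝ) (x : Vec3) : ℝ :=
  deriv (fun s => f (Function.update x α s)) (x α)

/-- Deformation gradient ∇y of a static map y : ℝ³ → ℝ³. -/
def gradV (y : Vec3 → Vec3) (x : Vec3) : Mat3 :=
  fun i α => pds α (fun z => y z i) x

/-- ∂ψ/∂F_{iα} for ψ = ψ(F,θ). -/
def dFM (i α : Fin 3) (ψ : Mat3 → ℝ → ℝ) (F : Mat3) (θ : ℝ) : ℝ :=
  deriv (fun s => ψ (updMat F i α s) θ) (F i α)

/-- ∂ψ/∂θ for ψ = ψ(F,θ). -/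
def dThM (ψ : Mat3 → ℝ → ℝ) (F : Mat3) (θ : ℝ) : ℝ :=
  deriv (fun s => ψ F s) θ

/-- Index set for the full extended state U = (ξ, v, θ) ∈ ℝ²³. -/
abbrev UIdx := Idx ⊕ (Fin 3 ⊕ Unit)

def uComp (U : FullState) : UIdx → ℝ
  | .inl B => xiComp U.1 B
  | .inr (.inl i) => U.2.1 i
  | .inr (.inr _) => U.2.2

def uUpd (U : FullState) : UIdx → ℝ → FullState
  | .inl B, s => (xiUpd U.1 B s, U.2)
  | .inr (.inl i), s => (U.1, Function.update U.2.1 i s, U.2.2)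
  | .inr (.inr _), s => (U.1, U.2.1, s)

/-- Partial derivative in the state variables (ξ,v,θ). -/
def pdU (B : UIdx) (f : FullState → ℝ) (U : FullState) : ℝ :=
  deriv (fun s => f (uUpd U B s)) (uComp U B)

/-- Second partial derivative in the state variables (ξ,v,θ). -/
def pdU2 (A B : UIdx) (f : FullState → ℝ) (U : FullState) : ℝ :=
  pdU A (fun V => pdU B f V) U

/-- Test functions for the weak formulation on T³ × [0,T):
C¹, periodic in x, compactly supported in time in [0,T). -/
def TestFun (T : ℝ) (φ : Vec3 → ℝ → ℝ) : Prop :=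
  ContDiff ℝ 1 (fun p : Vec3 × ℝ => φ p.1 p.2) ∧ PeriodicX φ ∧
  ∃ T' : ℝ, T' < T ∧ ∀ (x : Vec3) (t : ℝ), T' ≤ t → φ x t = 0

/-- The elastic stress Σ_{iα} of the augmented constitutive theory. -/
def SigmaA (ψ : Xi → ℝ → ℝ) (ξ : Xi) (θ : ℝ) (i α : Fin 3) : ℝ :=
  ∑ B : Idx, dXi B ψ ξ θ * dPhi B i α ξ.1


def eB (B : Idx) : Xi := xiUpd 0 B 1

lemma updMat_eq (F : Mat3) (i α : Fin 3) (s : ℝ) :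
    updMat F i α s = F + (s - F i α) • updMat 0 i α 1 := by
  funext a b
  by_cases ha : a = i
  · subst ha
    by_cases hb : b = α
    · subst hb; simp [updMat]
    · simp [updMat, hb]
  · simp [updMat, ha]

lemma xiUpd_eq (ξ : Xi) (B : Idx) (s : ℝ) :
    xiUpd ξ B s = ξ + (s - xiComp ξ B) • eB B := by
  rcases B with ⟨i, α⟩ | ⟨i, α⟩ | u
  · ext <;> simp [xiUpd, eB, xiComp, updMat_eq ξ.1 i α s]
  · ext <;> simp [xiUpd, eB, xiComp, updMat_eq ξ.2.1 i α s]
  · ext <;> simp [xiUpd, eB, xiComp]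

lemma xi_decomp (u : Xi) : u = ∑ B : Idx, xiComp u B • eB B := by
  obtain ⟨F, Z, w⟩ := u
  simp only [Fintype.sum_sum_type, Fintype.sum_prod_type, Fin.sum_univ_three]
  refine Prod.ext ?_ (Prod.ext ?_ ?_)
  · funext a b
    fin_cases a <;> fin_cases b <;> simp [xiComp, eB, xiUpd, updMat]
  · funext a b
    fin_cases a <;> fin_cases b <;> simp [xiComp, eB, xiUpd, updMat]
  · simp [xiComp, eB, xiUpd, updMat]

def unc (f : Xi → ℝ → ℝ) : Xi × ℝ → ℝ := fun p => f p.1 p.2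

def UU : Set (Xi × ℝ) := Set.univ ×ˢ Set.Ioi (0:ℝ)

lemma isOpen_UU : IsOpen UU := isOpen_univ.prod isOpen_Ioi

lemma mem_UU {ξ : Xi} {θ : ℝ} (h : 0 < θ) : (ξ, θ) ∈ UU := ⟨trivial, h⟩

lemma hasDerivAt_line (f : Xi → ℝ → ℝ) (ξ u : Xi) (θ t : ℝ)
    (h : DifferentiableAt ℝ (unc f) (ξ + t • u, θ)) :
    HasDerivAt (fun s : ℝ => f (ξ + s • u) θ) (fderiv ℝ (unc f) (ξ + t • u, θ) (u, 0)) t := by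
  have h1 : HasDerivAt (fun s : ℝ => ((ξ + s • u, θ) : Xi × ℝ)) (u, 0) t := by
    refine HasDerivAt.prodMk ?_ (hasDerivAt_const _ _)
    simpa using ((hasDerivAt_id t).smul_const u).const_add ξ
  exact h.hasFDerivAt.comp_hasDerivAt t h1

lemma dXi_eq (f : Xi → ℝ → ℝ) (B : Idx) (ξ : Xi) (θ : ℝ)
    (h : DifferentiableAt ℝ (unc f) (ξ, θ)) :
    dXi B f ξ θ = fderiv ℝ (unc f) (ξ, θ) (eB B, 0) := by
  have h1 : HasDerivAt (fun s : ℝ => ((xiUpd ξ B s, θ) : Xi × ℝ)) (eB B, 0) (xiComp ξ B) := by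
    refine HasDerivAt.prodMk ?_ (hasDerivAt_const _ _)
    have := (((hasDerivAt_id (xiComp ξ B)).sub_const (xiComp ξ B)).smul_const (eB B)).const_add ξ
    have e : (fun s => xiUpd ξ B s) = fun s => ξ + (s - xiComp ξ B) • eB B :=
      funext fun s => xiUpd_eq ξ B s
    change HasDerivAt (fun s => xiUpd ξ B s) _ _
    rw [e]
    simpa using this
  have h2 : ((xiUpd ξ B (xiComp ξ B), θ) : Xi × ℝ) = (ξ, θ) := by simp [xiUpd_eq]
  have h3 : HasFDerivAt (unc f) (fderiv ℝ (unc f) (ξ, θ)) (xiUpd ξ B (xiComp ξ B), θ) := by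
    rw [h2]; exact h.hasFDerivAt
  exact (h3.comp_hasDerivAt (xiComp ξ B) h1).deriv

lemma hasDerivAt_th (f : Xi → ℝ → ℝ) (ξ : Xi) (θ : ℝ)
    (h : DifferentiableAt ℝ (unc f) (ξ, θ)) :
    HasDerivAt (fun s => f ξ s) (fderiv ℝ (unc f) (ξ, θ) (0, 1)) θ := by
  have h1 : HasDerivAt (fun s : ℝ => ((ξ, s) : Xi × ℝ)) (0, 1) θ :=
    HasDerivAt.prodMk (hasDerivAt_const _ _) (hasDerivAt_id θ)
  exact h.hasFDerivAt.comp_hasDerivAt θ h1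

lemma hasDerivAt_line_sum (f : Xi → ℝ → ℝ) (ξ u : Xi) (θ t : ℝ)
    (h : DifferentiableAt ℝ (unc f) (ξ + t • u, θ)) :
    HasDerivAt (fun s : ℝ => f (ξ + s • u) θ)
      (∑ B : Idx, dXi B f (ξ + t • u) θ * xiComp u B) t := by
  have h1 := hasDerivAt_line f ξ u θ t h
  have h2 : ((u, 0) : Xi × ℝ) = ∑ B : Idx, xiComp u B • ((eB B, 0) : Xi × ℝ) := by
    refine Prod.ext ?_ ?_
    · rw [Prod.fst_sum]; exact xi_decomp u
    · rw [Prod.snd_sum]; simp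
  rw [h2, map_sum] at h1
  convert h1 using 1
  refine Finset.sum_congr rfl fun B _ => ?_
  rw [map_smul, dXi_eq f B _ _ h, smul_eq_mul, mul_comm]

lemma contDiffOn_diffAt {f : Xi → ℝ → ℝ} {n : ℕ} (h : ContDiffOn ℝ (n+1 : ℕ) (unc f) UU)
    {ξ : Xi} {θ : ℝ} (hθ : 0 < θ) : DifferentiableAt ℝ (unc f) (ξ, θ) :=
  (h.contDiffAt (isOpen_UU.mem_nhds (mem_UU hθ))).differentiableAt (by simp)

lemma contDiffOn_fderiv {f : Xi → ℝ → ℝ} {n : ℕ} (h : ContDiffOn ℝ (n+1 : ℕ) (unc f) UU)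
    (e : Xi × ℝ) : ContDiffOn ℝ n (fun p => fderiv ℝ (unc f) p e) UU := by
  have := h.fderiv_of_isOpen (m := n) isOpen_UU (by norm_cast)
  exact this.clm_apply contDiffOn_const

lemma contDiffOn_dXi {f : Xi → ℝ → ℝ} {n : ℕ} (h : ContDiffOn ℝ (n+1 : ℕ) (unc f) UU)
    (B : Idx) : ContDiffOn ℝ n (unc (dXi B f)) UU := by
  refine (contDiffOn_fderiv h (eB B, 0)).congr ?_
  rintro ⟨ξ, θ⟩ ⟨-, hθ⟩
  exact dXi_eq f B ξ θ (contDiffOn_diffAt h hθ)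

lemma contDiffOn_dTh {f : Xi → ℝ → ℝ} {n : ℕ} (h : ContDiffOn ℝ (n+1 : ℕ) (unc f) UU) :
    ContDiffOn ℝ n (unc (dTh f)) UU := by
  refine (contDiffOn_fderiv h (0, 1)).congr ?_
  rintro ⟨ξ, θ⟩ ⟨-, hθ⟩
  exact (hasDerivAt_th f ξ θ (contDiffOn_diffAt h hθ)).deriv

lemma hasDerivAt_dTh {f : Xi → ℝ → ℝ} {n : ℕ} (h : ContDiffOn ℝ (n+1 : ℕ) (unc f) UU)
    (ξ : Xi) {θ : ℝ} (hθ : 0 < θ) : HasDerivAt (fun s => f ξ s) (dTh f ξ θ) θ := by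
  have := hasDerivAt_th f ξ θ (contDiffOn_diffAt h hθ)
  exact this.differentiableAt.hasDerivAt

lemma contDiffOn_eta {f : Xi → ℝ → ℝ} {n : ℕ} (h : ContDiffOn ℝ (n+1 : ℕ) (unc f) UU) :
    ContDiffOn ℝ n (unc (etaHat f)) UU := (contDiffOn_dTh h).neg

/-- One-dimensional Taylor lower bound. -/
lemma taylor_lower (φ φ1 φ2 : ℝ → ℝ) (m : ℝ)
    (h1 : ∀ t ∈ Icc (0:ℝ) 1, HasDerivAt φ (φ1 t) t)
    (h2 : ∀ t ∈ Icc (0:ℝ) 1, HasDerivAt φ1 (φ2 t) t)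
    (h3 : ∀ t ∈ Icc (0:ℝ) 1, m ≤ φ2 t) :
    m / 2 ≤ φ 1 - φ 0 - φ1 0 := by
  have a1 : ∀ t ∈ Icc (0:ℝ) 1, φ1 0 + m * t ≤ φ1 t := by
    intro t ht
    have hd : ∀ s ∈ Icc (0:ℝ) 1, HasDerivAt (fun s => φ1 s - m * s) (φ2 s - m) s := by
      intro s hs
      simpa using (h2 s hs).fun_sub ((hasDerivAt_id s).const_mul m)
    have := monotoneOn_of_deriv_nonneg (convex_Icc (0:ℝ) 1)
      (fun s hs => (hd s hs).continuousAt.continuousWithinAt)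
      (fun s hs => (hd s (interior_subset hs)).differentiableAt.differentiableWithinAt)
      (fun s hs => by rw [(hd s (interior_subset hs)).deriv]; linarith [h3 s (interior_subset hs)])
      (left_mem_Icc.2 zero_le_one) ht ht.1
    simp only at this
    linarith
  have hd : ∀ s ∈ Icc (0:ℝ) 1,
      HasDerivAt (fun s => φ s - φ1 0 * s - m / 2 * s ^ 2) (φ1 s - φ1 0 - m * s) s := by
    intro s hs
    have := ((h1 s hs).fun_sub ((hasDerivAt_id s).const_mul (φ1 0))).fun_sub
      ((hasDerivAt_pow 2 s).const_mul (m/2))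
    have e : φ1 s - φ1 0 * 1 - m / 2 * (((2 : ℕ) : ℝ) * s ^ (2 - 1)) = φ1 s - φ1 0 - m * s := by
      norm_num; ring
    rw [e] at this
    exact this
  have := monotoneOn_of_deriv_nonneg (convex_Icc (0:ℝ) 1)
      (fun s hs => (hd s hs).continuousAt.continuousWithinAt)
      (fun s hs => (hd s (interior_subset hs)).differentiableAt.differentiableWithinAt)
      (fun s hs => by rw [(hd s (interior_subset hs)).deriv]; linarith [a1 s (interior_subset hs)])
      (left_mem_Icc.2 zero_le_one) (right_mem_Icc.2 zero_le_one) zero_le_one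
  simp only at this
  linarith

lemma abs_le_mnorm (F : Mat3) (i j : Fin 3) : |F i j| ≤ mnorm F := by
  rw [mnorm, ← Real.sqrt_sq_eq_abs]
  apply Real.sqrt_le_sqrt
  calc (F i j)^2 ≤ ∑ j, (F i j)^2 :=
        Finset.single_le_sum (f := fun j => (F i j)^2) (fun _ _ => sq_nonneg _) (Finset.mem_univ j)
    _ ≤ _ := Finset.single_le_sum (f := fun i => ∑ j, (F i j)^2)
        (fun _ _ => Finset.sum_nonneg fun _ _ => sq_nonneg _) (Finset.mem_univ i)

lemma mnorm_nonneg (F : Mat3) : 0 ≤ mnorm F := Real.sqrt_nonneg _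

lemma mnorm_sq (F : Mat3) : mnorm F ^ 2 = ∑ i, ∑ j, (F i j)^2 :=
  Real.sq_sqrt (Finset.sum_nonneg fun _ _ => Finset.sum_nonneg fun _ _ => sq_nonneg _)

lemma vnorm_sq (v : Vec3) : vnorm v ^ 2 = ∑ i, (v i)^2 :=
  Real.sq_sqrt (Finset.sum_nonneg fun _ _ => sq_nonneg _)

lemma norm_mat_le (F : Mat3) : ‖F‖ ≤ mnorm F := by
  rw [pi_norm_le_iff_of_nonneg (mnorm_nonneg F)]
  intro i
  rw [pi_norm_le_iff_of_nonneg (mnorm_nonneg F)]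
  exact fun j => abs_le_mnorm F i j

lemma norm_xi_le (ξ : Xi) {a : ℝ} (h1 : mnorm ξ.1 ≤ a) (h2 : mnorm ξ.2.1 ≤ a) (h3 : |ξ.2.2| ≤ a) :
    ‖ξ‖ ≤ a := by
  rw [Prod.norm_def, Prod.norm_def]
  exact max_le ((norm_mat_le _).trans h1) (max_le ((norm_mat_le _).trans h2) h3)

lemma abs_xiComp_le (ξ : Xi) (B : Idx) : |xiComp ξ B| ≤ ‖ξ‖ := by
  rcases B with ⟨i, α⟩ | ⟨i, α⟩ | u
  · exact ((norm_le_pi_norm (ξ.1 i) α).trans (norm_le_pi_norm ξ.1 i)).trans (norm_fst_le ξ)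
  · exact (((norm_le_pi_norm (ξ.2.1 i) α).trans (norm_le_pi_norm ξ.2.1 i)).trans
      (norm_fst_le ξ.2)).trans (norm_snd_le ξ)
  · exact (norm_snd_le ξ.2).trans (norm_snd_le ξ)

lemma le_one_add_rpow {x a : ℝ} (hx : 0 ≤ x) (ha : 1 ≤ a) : x ≤ 1 + x ^ a := by
  rcases le_total x 1 with h | h
  · linarith [Real.rpow_nonneg hx a]
  · linarith [Real.self_le_rpow_of_one_le h ha]

lemma le_eps_rpow {a ε : ℝ} (ha : 1 < a) (hε : 0 < ε) :
    ∃ C : ℝ, 0 ≤ C ∧ ∀ x : ℝ, 0 ≤ x → x ≤ ε * x ^ a + C := by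
  refine ⟨(1/ε) ^ (1/(a-1)), by positivity, fun x hx => ?_⟩
  have hC : 0 ≤ (1/ε) ^ (1/(a-1)) := by positivity
  have hxa := Real.rpow_nonneg hx a
  rcases le_total x ((1/ε) ^ (1/(a-1))) with h | h
  · nlinarith
  · have hx0 : 0 < x := lt_of_lt_of_le (by positivity) h
    have h2 : 1/ε ≤ x ^ (a-1) := by
      have := Real.rpow_le_rpow hC h (by linarith : 0 ≤ a - 1)
      rwa [← Real.rpow_mul (by positivity), one_div_mul_cancel (by linarith), Real.rpow_one] at this
    have h3 : x ^ a = x ^ (a-1) * x := by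
      rw [Real.rpow_sub_one hx0.ne']; field_simp
    have h4 : 1 ≤ ε * x ^ (a-1) := by
      rw [div_le_iff₀ hε] at h2; linarith
    rw [h3]
    nlinarith

lemma xiNorm_nonneg (p q r : ℝ) (ξ : Xi) : 0 ≤ xiNorm p q r ξ := by
  have := Real.rpow_nonneg (mnorm_nonneg ξ.1) p
  have := Real.rpow_nonneg (mnorm_nonneg ξ.2.1) q
  have := Real.rpow_nonneg (abs_nonneg ξ.2.2) r
  unfold xiNorm; linarith

lemma norm_le_one_add {p q r : ℝ} (hp : 1 ≤ p) (hq : 1 ≤ q) (hr : 1 ≤ r) (ξ : Xi) :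
    ‖ξ‖ ≤ 1 + xiNorm p q r ξ := by
  have := Real.rpow_nonneg (mnorm_nonneg ξ.1) p
  have := Real.rpow_nonneg (mnorm_nonneg ξ.2.1) q
  have := Real.rpow_nonneg (abs_nonneg ξ.2.2) r
  have := le_one_add_rpow (mnorm_nonneg ξ.1) hp
  have := le_one_add_rpow (mnorm_nonneg ξ.2.1) hq
  have := le_one_add_rpow (abs_nonneg ξ.2.2) hr
  unfold xiNorm
  apply norm_xi_le <;> linarith

lemma norm_le_eps {p q r ε : ℝ} (hp : 1 < p) (hq : 1 < q) (hr : 1 < r) (hε : 0 < ε) :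
    ∃ C : ℝ, 0 ≤ C ∧ ∀ ξ : Xi, ‖ξ‖ ≤ ε * xiNorm p q r ξ + C := by
  obtain ⟨C1, h1, H1⟩ := le_eps_rpow hp hε
  obtain ⟨C2, h2, H2⟩ := le_eps_rpow hq hε
  obtain ⟨C3, h3, H3⟩ := le_eps_rpow hr hε
  refine ⟨C1 + C2 + C3, by linarith, fun ξ => ?_⟩
  have := mul_nonneg hε.le (Real.rpow_nonneg (mnorm_nonneg ξ.1) p)
  have := mul_nonneg hε.le (Real.rpow_nonneg (mnorm_nonneg ξ.2.1) q)
  have := mul_nonneg hε.le (Real.rpow_nonneg (abs_nonneg ξ.2.2) r)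
  have := H1 _ (mnorm_nonneg ξ.1)
  have := H2 _ (mnorm_nonneg ξ.2.1)
  have := H3 _ (abs_nonneg ξ.2.2)
  unfold xiNorm
  apply norm_xi_le <;> linarith

/-- Compact sets in the domain. -/
def KK (ρ a b : ℝ) : Set (Xi × ℝ) := Metric.closedBall 0 ρ ×ˢ Icc a b

lemma isCompact_KK (ρ a b : ℝ) : IsCompact (KK ρ a b) :=
  (isCompact_closedBall _ _).prod isCompact_Icc

lemma KK_sub {ρ a b : ℝ} (ha : 0 < a) : KK ρ a b ⊆ UU := fun x hx =>
  ⟨trivial, lt_of_lt_of_le ha hx.2.1⟩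

lemma mem_KK {ρ a b : ℝ} {ξ : Xi} {θ : ℝ} (h : ‖ξ‖ ≤ ρ) (h1 : a ≤ θ) (h2 : θ ≤ b) :
    (ξ, θ) ∈ KK ρ a b := ⟨by simpa using h, h1, h2⟩

lemma bdd_KK {f : Xi → ℝ → ℝ} (hf : ContinuousOn (unc f) UU) {ρ a b : ℝ} (ha : 0 < a) :
    ∃ C : ℝ, 0 ≤ C ∧ ∀ ξ θ, ‖ξ‖ ≤ ρ → a ≤ θ → θ ≤ b → |f ξ θ| ≤ C := by
  obtain ⟨C, hC⟩ := (isCompact_KK ρ a b).exists_bound_of_continuousOn (hf.mono (KK_sub ha))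
  exact ⟨max C 0, le_max_right _ _, fun ξ θ h h1 h2 =>
    (hC (ξ, θ) (mem_KK h h1 h2)).trans (le_max_left _ _)⟩

lemma pos_KK {f : Xi → ℝ → ℝ} (hf : ContinuousOn (unc f) UU)
    (hpos : ∀ ξ θ, 0 < θ → 0 < f ξ θ) {ρ a b : ℝ} (ha : 0 < a) :
    ∃ κ : ℝ, 0 < κ ∧ ∀ ξ θ, ‖ξ‖ ≤ ρ → a ≤ θ → θ ≤ b → κ ≤ f ξ θ := by
  obtain ⟨κ, hκ, H⟩ := (isCompact_KK ρ a b).exists_forall_le' (a := 0) (hf.mono (KK_sub ha))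
    (fun x hx => hpos x.1 x.2 (lt_of_lt_of_le ha hx.2.1))
  exact ⟨κ, hκ, fun ξ θ h h1 h2 => H (ξ, θ) (mem_KK h h1 h2)⟩

/-- The quadratic form of the Hessian in ξ. -/
def hessQ (ψ : Xi → ℝ → ℝ) (ξ : Xi) (θ : ℝ) (u : Idx → ℝ) : ℝ :=
  ∑ A : Idx, ∑ B : Idx, dXi A (dXi B ψ) ξ θ * u A * u B

lemma hessQ_smul (ψ : Xi → ℝ → ℝ) (ξ : Xi) (θ s : ℝ) (u : Idx → ℝ) :
    hessQ ψ ξ θ (s • u) = s ^ 2 * hessQ ψ ξ θ u := by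
  unfold hessQ
  rw [Finset.mul_sum]
  refine Finset.sum_congr rfl fun A _ => ?_
  rw [Finset.mul_sum]
  refine Finset.sum_congr rfl fun B _ => ?_
  simp only [Pi.smul_apply, smul_eq_mul]; ring

lemma hess_lower {ψ : Xi → ℝ → ℝ} (h3 : ContDiffOn ℝ (2+1 : ℕ) (unc ψ) UU)
    (hconv : PsiConvex ψ) {ρ a b : ℝ} (ha : 0 < a) :
    ∃ m : ℝ, 0 < m ∧ ∀ ξ θ, ‖ξ‖ ≤ ρ → a ≤ θ → θ ≤ b → ∀ u : Idx → ℝ,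
      m * ∑ B, (u B)^2 ≤ hessQ ψ ξ θ u := by
  have hc : ∀ A B, ContinuousOn (unc (dXi A (dXi B ψ))) UU := fun A B =>
    (contDiffOn_dXi (n := 1) (contDiffOn_dXi (n := 2) h3 B) A).continuousOn
  have hcomp : IsCompact (KK ρ a b ×ˢ Metric.sphere (0 : Idx → ℝ) 1) :=
    (isCompact_KK ρ a b).prod (isCompact_sphere _ _)
  have hcont : ContinuousOn (fun x : (Xi × ℝ) × (Idx → ℝ) => hessQ ψ x.1.1 x.1.2 x.2)
      (KK ρ a b ×ˢ Metric.sphere (0 : Idx → ℝ) 1) := by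
    unfold hessQ
    refine continuousOn_finsetSum _ fun A _ => continuousOn_finsetSum _ fun B _ => ?_
    refine ContinuousOn.mul (ContinuousOn.mul ?_ ?_) ?_
    · exact (hc A B).comp continuousOn_fst (fun x hx => KK_sub ha hx.1)
    · exact ((continuous_apply A).comp continuous_snd).continuousOn
    · exact ((continuous_apply B).comp continuous_snd).continuousOn
  obtain ⟨m, hm, H⟩ := hcomp.exists_forall_le' (a := 0) hcont (by
    rintro ⟨⟨ξ, θ⟩, u⟩ ⟨hx, hu⟩
    refine (hconv ξ θ (lt_of_lt_of_le ha hx.2.1)).1 u ?_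
    rintro rfl
    simp at hu)
  refine ⟨m / 19, by positivity, fun ξ θ h h1 h2 u => ?_⟩
  have hsum : ∑ B, (u B)^2 ≤ 19 * ‖u‖^2 := by
    calc ∑ B, (u B)^2 ≤ ∑ _B : Idx, ‖u‖^2 := by
          refine Finset.sum_le_sum fun B _ => ?_
          rw [← sq_abs (u B)]
          exact pow_le_pow_left₀ (abs_nonneg _) (norm_le_pi_norm u B) 2
      _ = 19 * ‖u‖^2 := by simp
  have key : m * ‖u‖^2 ≤ hessQ ψ ξ θ u := by
    by_cases hu : u = 0
    · subst hu; simp [hessQ]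
    · have hn : ‖u‖ ≠ 0 := norm_ne_zero_iff.2 hu
      have h5 := H ((ξ, θ), ‖u‖⁻¹ • u) ⟨mem_KK h h1 h2, by simp [norm_smul, hn]⟩
      simp only [hessQ_smul] at h5
      have : hessQ ψ ξ θ u = ‖u‖^2 * (‖u‖⁻¹^2 * hessQ ψ ξ θ u) := by field_simp
      rw [this, mul_comm m]
      exact mul_le_mul_of_nonneg_left h5 (sq_nonneg _)
  nlinarith

lemma xi_bracket {ψ : Xi → ℝ → ℝ} (h3 : ContDiffOn ℝ (2+1 : ℕ) (unc ψ) UU)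
    {ρ m θ : ℝ} (hθ : 0 < θ)
    (H : ∀ ξ, ‖ξ‖ ≤ ρ → ∀ u : Idx → ℝ, m * ∑ B, (u B)^2 ≤ hessQ ψ ξ θ u)
    {ξ ξ' : Xi} (hξ : ‖ξ‖ ≤ ρ) (hξ' : ‖ξ'‖ ≤ ρ) :
    m / 2 * ∑ B, (xiComp ξ B - xiComp ξ' B)^2 ≤
      ψ ξ θ - ψ ξ' θ - ∑ B : Idx, dXi B ψ ξ' θ * (xiComp ξ B - xiComp ξ' B) := by
  have hsub : ∀ B, xiComp (ξ - ξ') B = xiComp ξ B - xiComp ξ' B := by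
    rintro (⟨i, α⟩ | ⟨i, α⟩ | u) <;> simp [xiComp]
  have key := taylor_lower (fun t => ψ (ξ' + t • (ξ - ξ')) θ)
    (fun t => ∑ B : Idx, dXi B ψ (ξ' + t • (ξ - ξ')) θ * xiComp (ξ - ξ') B)
    (fun t => ∑ B : Idx, (∑ A : Idx, dXi A (dXi B ψ) (ξ' + t • (ξ - ξ')) θ * xiComp (ξ - ξ') A)
      * xiComp (ξ - ξ') B) (m * ∑ B, (xiComp (ξ - ξ') B)^2)
    (fun t _ => hasDerivAt_line_sum ψ ξ' (ξ - ξ') θ t (contDiffOn_diffAt h3 hθ))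
    (fun t _ => HasDerivAt.fun_sum fun B _ =>
      (hasDerivAt_line_sum (dXi B ψ) ξ' (ξ - ξ') θ t
        (contDiffOn_diffAt (n := 1) (contDiffOn_dXi (n := 2) h3 B) hθ)).mul_const _)
    (fun t ht => by
      have hmem : ‖ξ' + t • (ξ - ξ')‖ ≤ ρ := by
        have := (convex_closedBall (0 : Xi) ρ).add_smul_sub_mem (x := ξ') (y := ξ)
          (by simpa using hξ') (by simpa using hξ) ht
        simpa using this
      refine (H _ hmem (xiComp (ξ - ξ'))).trans (le_of_eq ?_)
      unfold hessQ
      rw [Finset.sum_comm]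
      refine Finset.sum_congr rfl fun B _ => ?_
      rw [Finset.sum_mul])
  simp only [one_smul, zero_smul, add_zero, add_sub_cancel, hsub] at key
  linarith

lemma th_taylor {ψ : Xi → ℝ → ℝ} (h3 : ContDiffOn ℝ (2+1 : ℕ) (unc ψ) UU)
    (ξ : Xi) {a b κ : ℝ} (ha : 0 < a)
    (H : ∀ θ, a ≤ θ → θ ≤ b → κ ≤ dTh (etaHat ψ) ξ θ) {x y : ℝ}
    (hx : x ∈ Icc a b) (hy : y ∈ Icc a b) :
    κ / 2 * (x - y)^2 ≤ ψ ξ x - ψ ξ y + etaHat ψ ξ x * (x - y) := by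
  have hl : ∀ t : ℝ, HasDerivAt (fun t : ℝ => x + t * (y - x)) (y - x) t := fun t => by
    simpa using ((hasDerivAt_id t).mul_const (y - x)).const_add x
  have hmem : ∀ t ∈ Icc (0:ℝ) 1, x + t * (y - x) ∈ Icc a b := fun t ht => by
    simpa using (convex_Icc a b).add_smul_sub_mem hx hy ht
  have key := taylor_lower (fun t => - ψ ξ (x + t * (y - x)))
    (fun t => etaHat ψ ξ (x + t * (y - x)) * (y - x))
    (fun t => dTh (etaHat ψ) ξ (x + t * (y - x)) * (y - x) * (y - x))
    (κ * (x - y)^2)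
    (fun t ht => by
      have h0 := lt_of_lt_of_le ha (hmem t ht).1
      have := ((hasDerivAt_dTh h3 ξ h0).comp t (hl t)).neg
      simp only [etaHat, neg_mul]
      exact this)
    (fun t ht => by
      have h0 := lt_of_lt_of_le ha (hmem t ht).1
      exact ((hasDerivAt_dTh (n := 1) (contDiffOn_eta (n := 2) h3) ξ h0).comp t (hl t)).mul_const _)
    (fun t ht => by
      have := H _ (hmem t ht).1 (hmem t ht).2
      nlinarith [sq_nonneg (x - y)])
  simp only [zero_mul, one_mul, add_zero, add_sub_cancel] at key
  linarith

lemma eta_mono {ψ : Xi → ℝ → ℝ} (h3 : ContDiffOn ℝ (2+1 : ℕ) (unc ψ) UU)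
    (hconv : PsiConvex ψ) (ξ : Xi) : MonotoneOn (fun s => etaHat ψ ξ s) (Ioi 0) := by
  have hd := fun (s : ℝ) (hs : s ∈ Ioi (0:ℝ)) =>
    hasDerivAt_dTh (n := 1) (contDiffOn_eta (n := 2) h3) ξ hs
  refine monotoneOn_of_deriv_nonneg (convex_Ioi 0)
    (fun s hs => (hd s hs).continuousAt.continuousWithinAt)
    (fun s hs => (hd s (interior_subset hs)).differentiableAt.differentiableWithinAt)
    (fun s hs => ?_)
  rw [(hd s (interior_subset hs)).deriv]
  exact (hconv ξ s (interior_subset hs)).2.le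

lemma th_bracket {ψ : Xi → ℝ → ℝ} (h3 : ContDiffOn ℝ (2+1 : ℕ) (unc ψ) UU)
    (hconv : PsiConvex ψ) (ξ : Xi) {δ b κ : ℝ} (hδ : 0 < δ) (hκ : 0 < κ)
    (H : ∀ θ, δ / 2 ≤ θ → θ ≤ b → κ ≤ dTh (etaHat ψ) ξ θ) {x y : ℝ}
    (hx0 : 0 < x) (hx : x ≤ b) (hy0 : δ ≤ y) (hy : y ≤ b) :
    κ / 8 * (x - y)^2 ≤ ψ ξ x - ψ ξ y + etaHat ψ ξ x * (x - y) := by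
  rcases le_total (δ / 2) x with h | h
  · have := th_taylor h3 ξ (by linarith : 0 < δ / 2) H ⟨h, hx⟩ ⟨by linarith, hy⟩
    nlinarith [sq_nonneg (x - y)]
  · have k1 := th_taylor h3 ξ (by linarith : 0 < δ / 2) H (x := δ / 2) (y := y)
      ⟨le_rfl, by linarith⟩ ⟨by linarith, hy⟩
    have k2 := th_taylor (κ := 0) h3 ξ hx0 (b := δ / 2)
      (fun θ h1 _ => (hconv ξ θ (lt_of_lt_of_le hx0 h1)).2.le)
      (x := x) (y := δ / 2) ⟨le_rfl, h⟩ ⟨h, le_rfl⟩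
    have k3 : etaHat ψ ξ x ≤ etaHat ψ ξ (δ / 2) :=
      eta_mono h3 hconv ξ hx0 (show (0:ℝ) < δ / 2 by linarith) h
    have k4 : 0 ≤ (etaHat ψ ξ (δ / 2) - etaHat ψ ξ x) * (y - δ / 2) :=
      mul_nonneg (by linarith) (by linarith)
    have k5 : (x - y)^2 ≤ 4 * (δ / 2 - y)^2 := by nlinarith
    nlinarith

lemma eta_upper {ψ : Xi → ℝ → ℝ} {c p q r ℓ : ℝ} (h3 : ContDiffOn ℝ (2+1 : ℕ) (unc ψ) UU)
    (hconv : PsiConvex ψ) (hgrow : GrowthCond ψ c p q r ℓ)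
    (hp : 4 ≤ p) (hq : 1 < q) (hr : 1 < r) (hl : 1 < ℓ) {ε : ℝ} (hε : 0 < ε) :
    ∃ C : ℝ, 0 ≤ C ∧ ∀ ξ θ, 0 < θ → etaHat ψ ξ θ ≤ ε * (xiNorm p q r ξ + θ ^ ℓ) + C := by
  obtain ⟨R, hR⟩ := hgrow.2.2.2 ε hε
  obtain ⟨C, hC, H⟩ := bdd_KK (ρ := 1 + |R|) (a := 1) (b := 1 + |R|)
    (contDiffOn_eta (n := 2) h3).continuousOn one_pos
  refine ⟨C, hC, fun ξ θ hθ => ?_⟩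
  have hN := xiNorm_nonneg p q r ξ
  have hT := Real.rpow_nonneg hθ.le ℓ
  rcases lt_or_ge R (xiNorm p q r ξ + θ ^ ℓ) with h | h
  · have := hR ξ θ hθ h
    have h2 := neg_abs_le (dTh ψ ξ θ)
    unfold etaHat
    linarith
  · have h1 := norm_le_one_add (by linarith) hq.le hr.le ξ (p := p)
    have h2 := le_one_add_rpow hθ.le hl.le
    have h4 := le_abs_self R
    have h5 := abs_nonneg R
    have k := H ξ (max θ 1) (by linarith) (le_max_right _ _) (max_le (by linarith) (by linarith))
    have k2 : etaHat ψ ξ θ ≤ etaHat ψ ξ (max θ 1) :=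
      eta_mono h3 hconv ξ hθ (show (0:ℝ) < max θ 1 by positivity) (le_max_left _ _)
    have k3 := le_abs_self (etaHat ψ ξ (max θ 1))
    have : 0 ≤ ε * (xiNorm p q r ξ + θ ^ ℓ) := by positivity
    linarith

lemma lin_bound {ψ : Xi → ℝ → ℝ} (h3 : ContDiffOn ℝ (2+1 : ℕ) (unc ψ) UU) {M δ : ℝ}
    (hδ : 0 < δ) :
    ∃ C : ℝ, 0 ≤ C ∧ ∀ ξ ξ' θ', ‖ξ'‖ ≤ M → δ ≤ θ' → θ' ≤ M →
      ∑ B : Idx, dXi B ψ ξ' θ' * (xiComp ξ B - xiComp ξ' B) ≤ C * (‖ξ‖ + M) := by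
  have : ∀ B : Idx, ∃ C : ℝ, 0 ≤ C ∧ ∀ ξ θ, ‖ξ‖ ≤ M → δ ≤ θ → θ ≤ M → |dXi B ψ ξ θ| ≤ C :=
    fun B => bdd_KK (contDiffOn_dXi (n := 2) h3 B).continuousOn hδ
  choose C hC H using this
  refine ⟨∑ B, C B, Finset.sum_nonneg fun B _ => hC B, fun ξ ξ' θ' h h1 h2 => ?_⟩
  rw [Finset.sum_mul]
  refine Finset.sum_le_sum fun B _ => ?_
  calc dXi B ψ ξ' θ' * (xiComp ξ B - xiComp ξ' B)
      ≤ |dXi B ψ ξ' θ'| * |xiComp ξ B - xiComp ξ' B| := by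
        rw [← abs_mul]; exact le_abs_self _
    _ ≤ C B * (‖ξ‖ + M) := by
        refine mul_le_mul (H B ξ' θ' h h1 h2) ?_ (abs_nonneg _) (hC B)
        have := abs_sub (xiComp ξ B) (xiComp ξ' B)
        linarith [abs_xiComp_le ξ B, abs_xiComp_le ξ' B]

lemma coercive_global {ψ : Xi → ℝ → ℝ} {c p q r ℓ : ℝ} (h3 : ContDiffOn ℝ (2+1 : ℕ) (unc ψ) UU)
    (hconv : PsiConvex ψ) (hgrow : GrowthCond ψ c p q r ℓ)
    (hp : 4 ≤ p) (hq : 1 < q) (hr : 1 < r) (hl : 1 < ℓ) {M δ : ℝ} (hM : 0 < M) (hδ : 0 < δ) :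
    ∃ C : ℝ, 0 ≤ C ∧ ∀ (ξ : Xi) (v : Vec3) (θ : ℝ), 0 < θ → ∀ U' ∈ Gamma M δ,
      c / 2 * (xiNorm p q r ξ + θ ^ ℓ) + 1 / 4 * (vnorm v)^2 - C
        ≤ relEnt ψ ξ v θ U'.1 U'.2.1 U'.2.2 := by
  have hc := hgrow.1
  obtain ⟨C1, hC1, H1⟩ := eta_upper h3 hconv hgrow hp hq hr hl
    (ε := c / (4 * M)) (by positivity)
  obtain ⟨C2, hC2, H2⟩ := lin_bound (M := M) h3 hδ
  obtain ⟨C3, hC3, H3⟩ := norm_le_eps (p := p) (by linarith) hq hr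
    (ε := c / (4 * (C2 + 1))) (by positivity)
  obtain ⟨C4, hC4, H4⟩ := bdd_KK (ρ := M) (a := δ) (b := M) h3.continuousOn hδ
  refine ⟨c + M * C1 + C2 * C3 + C2 * M + C4 + M^2 / 2, by positivity, ?_⟩
  rintro ξ v θ hθ ⟨ξ', v', θ'⟩ ⟨g1, g2, g3, g4, g5, g6⟩
  simp only at g1 g2 g3 g4 g5 g6 ⊢
  have hξ' : ‖ξ'‖ ≤ M := norm_xi_le ξ' g1 g2 g3
  have hN := xiNorm_nonneg p q r ξ
  have hT := Real.rpow_nonneg hθ.le ℓ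
  have e1 := (hgrow.2.1 ξ θ hθ).1
  have e2 := H1 ξ θ hθ
  have e3 := H2 ξ ξ' θ' hξ' g5 g6
  have e4 := H3 ξ
  have e5 := (le_abs_self _).trans (H4 ξ' θ' hξ' g5 g6)
  have f2 : θ' * etaHat ψ ξ θ ≤ c / 4 * (xiNorm p q r ξ + θ ^ ℓ) + M * C1 := by
    have hpos : 0 ≤ c / (4 * M) * (xiNorm p q r ξ + θ ^ ℓ) + C1 := by positivity
    have : θ' * etaHat ψ ξ θ ≤ M * (c / (4 * M) * (xiNorm p q r ξ + θ ^ ℓ) + C1) :=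
      (mul_le_mul_of_nonneg_left e2 (by linarith)).trans (mul_le_mul_of_nonneg_right g6 hpos)
    refine this.trans (le_of_eq ?_)
    field_simp
  have f3 : C2 * ‖ξ‖ ≤ c / 4 * xiNorm p q r ξ + C2 * C3 := by
    have h1 : C2 * ‖ξ‖ ≤ C2 * (c / (4 * (C2 + 1)) * xiNorm p q r ξ + C3) :=
      mul_le_mul_of_nonneg_left e4 hC2
    have h2 : C2 * (c / (4 * (C2 + 1))) ≤ c / 4 := by
      rw [mul_div_assoc', div_le_div_iff₀ (by positivity) (by positivity)]
      nlinarith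
    nlinarith [mul_le_mul_of_nonneg_right h2 hN]
  have f4 : 1 / 4 * vnorm v ^ 2 - M^2 / 2 ≤ 1 / 2 * ∑ i, (v i - v' i)^2 := by
    have hv' : ∑ i, (v' i)^2 ≤ M^2 := by
      rw [← vnorm_sq]; exact pow_le_pow_left₀ (Real.sqrt_nonneg _) g4 2
    rw [vnorm_sq]
    have : ∑ i, (v i)^2 ≤ ∑ i, (2 * (v i - v' i)^2 + 2 * (v' i)^2) :=
      Finset.sum_le_sum fun i _ => by nlinarith [sq_nonneg (v i - 2 * v' i)]
    rw [Finset.sum_add_distrib, ← Finset.mul_sum, ← Finset.mul_sum] at this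
    linarith
  have f5 : 0 ≤ c / 4 * θ ^ ℓ := by positivity
  have e1' : c * (xiNorm p q r ξ + θ ^ ℓ) - c ≤ ψ ξ θ + θ * etaHat ψ ξ θ := by
    unfold eHat at e1; unfold etaHat; linarith
  unfold relEnt psiRel
  nlinarith

/-- Appendix Lemma A.2(1), coercivity of the relative entropy. -/
theorem coercivity_relative_entropy
    (ψ : Xi → ℝ → ℝ) (c p q r ℓ : ℝ)
    (hψ3 : PsiC3 ψ) (hconv : PsiConvex ψ)
    (hgrow : GrowthCond ψ c p q r ℓ)
    (hp : 4 ≤ p) (hq : 1 < q) (hr : 1 < r) (hl : 1 < ℓ)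
    (M δ : ℝ) (hM : 0 < M) (hδ : 0 < δ) :
    ∃ R K₁ K₂ : ℝ, 0 < K₁ ∧ 0 < K₂ ∧
      ∀ (ξ : Xi) (v : Vec3) (θ : ℝ), 0 < θ → ∀ U' ∈ Gamma M δ,
        (R < xiNorm p q r ξ + θ ^ ℓ + (vnorm v)^2 →
          K₁ / 2 * (xiNorm p q r ξ + θ ^ ℓ + (vnorm v)^2)
            ≤ relEnt ψ ξ v θ U'.1 U'.2.1 U'.2.2) ∧
        (xiNorm p q r ξ + θ ^ ℓ + (vnorm v)^2 ≤ R →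
          K₂ * (mnorm (ξ.1 - U'.1.1)^2 + mnorm (ξ.2.1 - U'.1.2.1)^2
              + (ξ.2.2 - U'.1.2.2)^2 + (θ - U'.2.2)^2
              + ∑ i, (v i - U'.2.1 i)^2)
            ≤ relEnt ψ ξ v θ U'.1 U'.2.1 U'.2.2) := by
  have h3 : ContDiffOn ℝ (2+1 : ℕ) (unc ψ) UU := by
    have : ((2+1 : ℕ) : WithTop ℕ∞) = 3 := by norm_num
    rw [this]; exact hψ3
  have hc := hgrow.1
  obtain ⟨C, hC, HC⟩ := coercive_global h3 hconv hgrow hp hq hr hl hM hδ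
  obtain ⟨K, hK, hK1, hK2⟩ : ∃ K : ℝ, 0 < K ∧ K ≤ c / 2 ∧ K ≤ 1 / 4 :=
    ⟨min (c / 2) (1 / 4), by positivity, min_le_left _ _, min_le_right _ _⟩
  have hR0 : 0 ≤ 2 * C / K := by positivity
  obtain ⟨m, hm, Hm⟩ := hess_lower h3 hconv (ρ := 1 + 2 * C / K + M) (a := δ) (b := M) hδ
  obtain ⟨κ, hκ, Hκ⟩ := pos_KK (ρ := 1 + 2 * C / K + M) (a := δ / 2) (b := 1 + 2 * C / K + M)
    (contDiffOn_dTh (n := 1) (contDiffOn_eta (n := 2) h3)).continuousOn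
    (fun ξ θ hθ => (hconv ξ θ hθ).2) (by linarith)
  obtain ⟨k, hk, hk1, hk2, hk3⟩ : ∃ k : ℝ, 0 < k ∧ k ≤ m / 2 ∧ k ≤ κ / 8 ∧ k ≤ 1 / 2 :=
    ⟨min (m / 2) (min (κ / 8) (1 / 2)), by positivity, min_le_left _ _,
      (min_le_right _ _).trans (min_le_left _ _), (min_le_right _ _).trans (min_le_right _ _)⟩
  refine ⟨2 * C / K, K, k, hK, hk, fun ξ v θ hθ U' hU' => ⟨fun hS => ?_, fun hS => ?_⟩⟩
  · have h := HC ξ v θ hθ U' hU'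
    have hN := xiNorm_nonneg p q r ξ
    have hT := Real.rpow_nonneg hθ.le ℓ
    have hv := sq_nonneg (vnorm v)
    rw [div_lt_iff₀ hK] at hS
    nlinarith [mul_le_mul_of_nonneg_right hK1 (add_nonneg hN hT),
      mul_le_mul_of_nonneg_right hK2 hv]
  · obtain ⟨ξ', v', θ'⟩ := U'
    obtain ⟨g1, g2, g3, g4, g5, g6⟩ := hU'
    simp only at g1 g2 g3 g4 g5 g6 ⊢
    have hN := xiNorm_nonneg p q r ξ
    have hT := Real.rpow_nonneg hθ.le ℓ
    have hv := sq_nonneg (vnorm v)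
    have b1 := norm_le_one_add (by linarith) hq.le hr.le ξ (p := p)
    have b2 := le_one_add_rpow hθ.le hl.le
    have hξ : ‖ξ‖ ≤ 1 + 2 * C / K + M := by linarith
    have hξ' : ‖ξ'‖ ≤ 1 + 2 * C / K + M := by linarith [norm_xi_le ξ' g1 g2 g3]
    have x1 := xi_bracket h3 (lt_of_lt_of_le hδ g5) (fun ζ hζ u => Hm ζ θ' hζ g5 g6 u) hξ hξ'
    have x2 := th_bracket h3 hconv ξ hδ hκ (fun s h1 h2 => Hκ ξ s hξ h1 h2) hθ
      (by linarith : θ ≤ 1 + 2 * C / K + M) g5 (by linarith)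
    have hsum : ∑ B, (xiComp ξ B - xiComp ξ' B)^2
        = mnorm (ξ.1 - ξ'.1)^2 + mnorm (ξ.2.1 - ξ'.2.1)^2 + (ξ.2.2 - ξ'.2.2)^2 := by
      rw [mnorm_sq, mnorm_sq]
      simp only [Fintype.sum_sum_type, Fintype.sum_prod_type, xiComp, Pi.sub_apply,
        Finset.univ_unique, Finset.sum_singleton]
      ring
    rw [← hsum]
    have n1 : 0 ≤ ∑ B, (xiComp ξ B - xiComp ξ' B)^2 := Finset.sum_nonneg fun _ _ => sq_nonneg _
    have n2 : 0 ≤ ∑ i, (v i - v' i)^2 := Finset.sum_nonneg fun _ _ => sq_nonneg _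
    have y1 := mul_le_mul_of_nonneg_right hk1 n1
    have y2 := mul_le_mul_of_nonneg_right hk2 (sq_nonneg (θ - θ'))
    have y3 := mul_le_mul_of_nonneg_right hk3 n2
    unfold relEnt psiRel
    linarith

end
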